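/- arXiv:1412.6461 — 2 statements merged into one kernel-verified Lean document; each statement's English description precedes it below -/
import Mathlib

section
/- Let u : ℝ² → ℝ be a smooth solution of Equation (E1): u_yy = u_y·u_xx − (u_x + u)·u_xy + u_x·u_y, such that u_y is nowhere zero. Then the pair P := −1/u_y, Q := (u_x + u)/u_y is a conservation law: ∂P/∂y = ∂Q/∂x at every point of ℝ². -/
/-- Partial derivative of a function on `ℝ²` in the direction `v`. -/
noncomputable def pd (v : ℝ × ℝ) (f : ℝ × ℝ → ℝ) : ℝ × ℝ → ℝ :=
  fun p => fderiv ℝ f p v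

/-- Coordinates are `(x, y)`. -/
noncomputable def dx : (ℝ × ℝ → ℝ) → ℝ × ℝ → ℝ := pd (1, 0)
noncomputable def dy : (ℝ × ℝ → ℝ) → ℝ × ℝ → ℝ := pd (0, 1)

/-!
Wherever `u_y ≠ 0`, `∂P/∂y - ∂Q/∂x = (u_yy - (u_y u_xx - (u_x + u) u_xy + u_x u_y)) / u_y²`:
the divergence of the pair is the defect of Equation (E1) multiplied by `1 / u_y²`. This uses only
the quotient rule and the symmetry of second derivatives at a single point, so the `x` and `y`
directions may be replaced by arbitrary vectors `v` and `w` of a normed space.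
-/

section DirectionalDerivatives

variable {𝕜 E F : Type*} [NontriviallyNormedField 𝕜]
  [NormedAddCommGroup E] [NormedSpace 𝕜 E] [NormedAddCommGroup F] [NormedSpace 𝕜 F] {p : E}

theorem hasFDerivAt_div {f g : E → 𝕜} {f' g' : E →L[𝕜] 𝕜}
    (hf : HasFDerivAt f f' p) (hg : HasFDerivAt g g' p) (hgp : g p ≠ 0) :
    HasFDerivAt (fun q ↦ f q / g q) ((g p ^ 2)⁻¹ • (g p • f' - f p • g')) p := by
  have hinv : HasFDerivAt (fun q ↦ (g q)⁻¹) (-(g p ^ 2)⁻¹ • g') p :=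
    (hasDerivAt_inv hgp).comp_hasFDerivAt p hg
  simp only [div_eq_mul_inv]
  refine (hf.mul hinv).congr_fderiv ?_
  ext v
  simp only [add_apply, sub_apply, smul_apply, smul_eq_mul]
  field_simp
  ring

theorem fderiv_div_apply {f g : E → 𝕜} (hf : DifferentiableAt 𝕜 f p)
    (hg : DifferentiableAt 𝕜 g p) (hgp : g p ≠ 0) (v : E) :
    fderiv 𝕜 (fun q ↦ f q / g q) p v =
      (fderiv 𝕜 f p v * g p - f p * fderiv 𝕜 g p v) / g p ^ 2 := by
  rw [(hasFDerivAt_div hf.hasFDerivAt hg.hasFDerivAt hgp).fderiv]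
  simp only [sub_apply, smul_apply, smul_eq_mul]
  ring

theorem differentiableAt_fderiv_of_contDiffAt_two {f : E → F} (hf : ContDiffAt 𝕜 2 f p) :
    DifferentiableAt 𝕜 (fderiv 𝕜 f) p :=
  (hf.fderiv_right (m := 1) one_add_one_eq_two.le).differentiableAt one_ne_zero

theorem fderiv_fderiv_apply {f : E → F} (hf : DifferentiableAt 𝕜 (fderiv 𝕜 f) p) (v w : E) :
    fderiv 𝕜 (fderiv 𝕜 f · w) p v = fderiv 𝕜 (fderiv 𝕜 f) p v w := by
  simp [fderiv_clm_apply hf (differentiableAt_const w)]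

end DirectionalDerivatives

theorem fderiv_fderiv_apply_comm {𝕜 E F : Type*} [RCLike 𝕜] [NormedAddCommGroup E]
    [NormedSpace 𝕜 E] [NormedAddCommGroup F] [NormedSpace 𝕜 F] {f : E → F} {p : E}
    (hf : ContDiffAt 𝕜 2 f p) (v w : E) :
    fderiv 𝕜 (fderiv 𝕜 f · w) p v = fderiv 𝕜 (fderiv 𝕜 f · v) p w := by
  have hf' := differentiableAt_fderiv_of_contDiffAt_two hf
  rw [fderiv_fderiv_apply hf', fderiv_fderiv_apply hf']
  exact (hf.isSymmSndFDerivAt minSmoothness_of_isRCLikeNormedField.le).eq v w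

section ConservationLaw

variable {𝕜 E : Type*} [RCLike 𝕜] [NormedAddCommGroup E] [NormedSpace 𝕜 E] {u : E → 𝕜} {p : E}

theorem E1_divergence_eq (v w : E) (hu : ContDiffAt 𝕜 2 u p) (hw : fderiv 𝕜 u p w ≠ 0) :
    fderiv 𝕜 (fun q ↦ -1 / fderiv 𝕜 u q w) p w -
        fderiv 𝕜 (fun q ↦ (fderiv 𝕜 u q v + u q) / fderiv 𝕜 u q w) p v =
      (fderiv 𝕜 (fderiv 𝕜 u · w) p w -
        (fderiv 𝕜 u p w * fderiv 𝕜 (fderiv 𝕜 u · v) p v -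
          (fderiv 𝕜 u p v + u p) * fderiv 𝕜 (fderiv 𝕜 u · v) p w +
          fderiv 𝕜 u p v * fderiv 𝕜 u p w)) / fderiv 𝕜 u p w ^ 2 := by
  have hu₀ : DifferentiableAt 𝕜 u p := hu.differentiableAt two_ne_zero
  have hu₁ (a : E) : DifferentiableAt 𝕜 (fderiv 𝕜 u · a) p :=
    (differentiableAt_fderiv_of_contDiffAt_two hu).clm_apply (differentiableAt_const a)
  have density : fderiv 𝕜 (fun q ↦ -1 / fderiv 𝕜 u q w) p w =
      fderiv 𝕜 (fderiv 𝕜 u · w) p w / fderiv 𝕜 u p w ^ 2 := by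
    simp [fderiv_div_apply (differentiableAt_const (-1)) (hu₁ w) hw]
  have flux : fderiv 𝕜 (fun q ↦ (fderiv 𝕜 u q v + u q) / fderiv 𝕜 u q w) p v =
      ((fderiv 𝕜 (fderiv 𝕜 u · v) p v + fderiv 𝕜 u p v) * fderiv 𝕜 u p w -
        (fderiv 𝕜 u p v + u p) * fderiv 𝕜 (fderiv 𝕜 u · v) p w) / fderiv 𝕜 u p w ^ 2 := by
    rw [fderiv_div_apply ((hu₁ v).fun_add hu₀) (hu₁ w) hw, fderiv_fun_add (hu₁ v) hu₀, add_apply,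
      fderiv_fderiv_apply_comm hu v w]
  rw [density, flux]
  ring

theorem E1_conservation_law_general (v w : E) (hu : ContDiffAt 𝕜 2 u p)
    (hw : fderiv 𝕜 u p w ≠ 0) :
    fderiv 𝕜 (fun q ↦ -1 / fderiv 𝕜 u q w) p w =
        fderiv 𝕜 (fun q ↦ (fderiv 𝕜 u q v + u q) / fderiv 𝕜 u q w) p v ↔
      fderiv 𝕜 (fderiv 𝕜 u · w) p w =
        fderiv 𝕜 u p w * fderiv 𝕜 (fderiv 𝕜 u · v) p v -
          (fderiv 𝕜 u p v + u p) * fderiv 𝕜 (fderiv 𝕜 u · v) p w +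
          fderiv 𝕜 u p v * fderiv 𝕜 u p w := by
  rw [← sub_eq_zero, E1_divergence_eq v w hu hw, div_eq_zero_iff, or_iff_left (pow_ne_zero 2 hw),
    sub_eq_zero]

end ConservationLaw

/-- For a smooth solution `u` of Equation (E1)
`u_yy = u_y·u_xx − (u_x + u)·u_xy + u_x·u_y` with `u_y` nowhere zero, the pair
`P = −1/u_y`, `Q = (u_x + u)/u_y` is a conservation law: `∂P/∂y = ∂Q/∂x`. -/
theorem E1_conservation_law (u : ℝ × ℝ → ℝ)
    (hu : ContDiff ℝ (⊤ : ℕ∞) u)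
    (hy : ∀ p : ℝ × ℝ, dy u p ≠ 0)
    (hsol : ∀ p : ℝ × ℝ,
      dy (dy u) p =
        dy u p * dx (dx u) p - (dx u p + u p) * dy (dx u) p + dx u p * dy u p) :
    ∀ p : ℝ × ℝ,
      dy (fun q => -1 / dy u q) p = dx (fun q => (dx u q + u q) / dy u q) p := by
  have hu₂ : ContDiff ℝ 2 u := hu.of_le (WithTop.coe_le_coe.2 le_top)
  exact fun p ↦ (E1_conservation_law_general (1, 0) (0, 1) hu₂.contDiffAt (hy p)).2 (hsol p)
end

section
/- Let u : ℝ² → ℝ be a smooth solution of Equation (E1): u_yy = u_y·u_xx − (u_x + u)·u_xy + u_x·u_y. Then the pair P := −e^{2x}·(u·u_x + u·u_xx − u_y), Q := −u·e^{2x}·u_xy is a conservation law: ∂P/∂y = ∂Q/∂x at every point of ℝ². -/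
/-!
The equation has the characteristic `e^{2x}` for this conservation law: for every `C³` function
`u`, solution or not, `∂P/∂y − ∂Q/∂x = e^{2x}·(u_yy − u_y·u_xx + (u_x + u)·u_xy − u_x·u_y)`.
Expanding both sides by the product rule, the only third-order terms are `u·∂_y∂_x∂_x u` and
`u·∂_x∂_y∂_x u`, which cancel by symmetry of second derivatives applied to `u_x`.
-/

section PartialDerivatives

variable {f g : ℝ × ℝ → ℝ} {p : ℝ × ℝ} (v w : ℝ × ℝ)

theorem pd_neg : pd v (fun q => -f q) p = -pd v f p := by
  simp only [pd, fderiv_fun_neg, neg_apply]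

theorem pd_add (hf : DifferentiableAt ℝ f p) (hg : DifferentiableAt ℝ g p) :
    pd v (fun q => f q + g q) p = pd v f p + pd v g p := by
  simp only [pd, fderiv_fun_add hf hg, add_apply]

theorem pd_sub (hf : DifferentiableAt ℝ f p) (hg : DifferentiableAt ℝ g p) :
    pd v (fun q => f q - g q) p = pd v f p - pd v g p := by
  simp only [pd, fderiv_fun_sub hf hg, sub_apply]

theorem pd_mul (hf : DifferentiableAt ℝ f p) (hg : DifferentiableAt ℝ g p) :
    pd v (fun q => f q * g q) p = f p * pd v g p + g p * pd v f p := by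
  simp only [pd, fderiv_fun_mul hf hg, add_apply, smul_apply, smul_eq_mul]

theorem pd_exp_const_mul_fst (c : ℝ) (p : ℝ × ℝ) :
    pd v (fun q => Real.exp (c * q.1)) p = Real.exp (c * p.1) * (c * v.1) := by
  have h : HasFDerivAt (fun q : ℝ × ℝ => Real.exp (c * q.1))
      (Real.exp (c * p.1) • c • ContinuousLinearMap.fst ℝ ℝ ℝ) p :=
    (hasFDerivAt_fst.const_mul c).exp
  simp only [pd, h.fderiv, smul_apply, smul_eq_mul, ContinuousLinearMap.coe_fst']

theorem contDiffAt_pd {m n : WithTop ℕ∞} (hf : ContDiffAt ℝ n f p) (hmn : m + 1 ≤ n) :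
    ContDiffAt ℝ m (pd v f) p :=
  (hf.fderiv_right hmn).clm_apply contDiffAt_const

theorem pd_pd_eq_fderiv_fderiv (hf : DifferentiableAt ℝ (fderiv ℝ f) p) :
    pd v (pd w f) p = fderiv ℝ (fderiv ℝ f) p v w := by
  change fderiv ℝ (fun q => fderiv ℝ f q w) p v = _
  simp [fderiv_clm_apply hf (differentiableAt_const w)]

theorem pd_comm (hf : ContDiffAt ℝ 2 f p) : pd v (pd w f) p = pd w (pd v f) p := by
  have hdf : DifferentiableAt ℝ (fderiv ℝ f) p :=
    (hf.fderiv_right (m := 1) (by norm_num)).differentiableAt one_ne_zero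
  rw [pd_pd_eq_fderiv_fderiv v w hdf, pd_pd_eq_fderiv_fderiv w v hdf]
  exact (hf.isSymmSndFDerivAt (by simp)).eq v w

end PartialDerivatives

/-- The conserved density `P` of the conservation law. -/
noncomputable def expDensity (u : ℝ × ℝ → ℝ) : ℝ × ℝ → ℝ :=
  fun q => -Real.exp (2 * q.1) * (u q * dx u q + u q * dx (dx u) q - dy u q)

/-- The flux `Q` of the conservation law. -/
noncomputable def expFlux (u : ℝ × ℝ → ℝ) : ℝ × ℝ → ℝ :=
  fun q => -u q * Real.exp (2 * q.1) * dy (dx u) q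

/-- Left side minus right side of Equation (E1), for `u` not assumed to be a solution. -/
noncomputable def e1Residual (u : ℝ × ℝ → ℝ) : ℝ × ℝ → ℝ :=
  fun q => dy (dy u) q -
    (dy u q * dx (dx u) q - (dx u q + u q) * dy (dx u) q + dx u q * dy u q)

section ConservationLaw

variable {u : ℝ × ℝ → ℝ} {p : ℝ × ℝ}

theorem dy_expDensity (hu : DifferentiableAt ℝ u p) (hux : DifferentiableAt ℝ (dx u) p)
    (huy : DifferentiableAt ℝ (dy u) p) (huxx : DifferentiableAt ℝ (dx (dx u)) p) :
    dy (expDensity u) p = -Real.exp (2 * p.1) *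
      (dy u p * dx u p + u p * dy (dx u) p + dy u p * dx (dx u) p + u p * dy (dx (dx u)) p
        - dy (dy u) p) := by
  have hexp : DifferentiableAt ℝ (fun q : ℝ × ℝ => -Real.exp (2 * q.1)) p := by fun_prop
  have hmul := hu.fun_mul hux
  have hmul' := hu.fun_mul huxx
  rw [dy]
  unfold expDensity
  rw [pd_mul _ hexp ((hmul.fun_add hmul').fun_sub huy), pd_neg, pd_exp_const_mul_fst,
    pd_sub _ (hmul.fun_add hmul') huy, pd_add _ hmul hmul', pd_mul _ hu hux, pd_mul _ hu huxx]
  simp only [dy]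
  ring

theorem dx_expFlux (hu : DifferentiableAt ℝ u p) (huxy : DifferentiableAt ℝ (dy (dx u)) p) :
    dx (expFlux u) p = -Real.exp (2 * p.1) *
      (dx u p * dy (dx u) p + 2 * u p * dy (dx u) p + u p * dx (dy (dx u)) p) := by
  have hexp : DifferentiableAt ℝ (fun q : ℝ × ℝ => Real.exp (2 * q.1)) p := by fun_prop
  rw [dx]
  unfold expFlux
  rw [pd_mul _ (hu.fun_neg.fun_mul hexp) huxy, pd_mul _ hu.fun_neg hexp, pd_neg,
    pd_exp_const_mul_fst]
  simp only [dx]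
  ring

theorem dy_expDensity_sub_dx_expFlux (hu : ContDiffAt ℝ 3 u p) :
    dy (expDensity u) p - dx (expFlux u) p = Real.exp (2 * p.1) * e1Residual u p := by
  have hux : ContDiffAt ℝ 2 (dx u) p := contDiffAt_pd _ hu (by norm_num)
  have huy : ContDiffAt ℝ 2 (dy u) p := contDiffAt_pd _ hu (by norm_num)
  have huxx : ContDiffAt ℝ 1 (dx (dx u)) p := contDiffAt_pd _ hux (by norm_num)
  have huxy : ContDiffAt ℝ 1 (dy (dx u)) p := contDiffAt_pd _ hux (by norm_num)
  have hu' : DifferentiableAt ℝ u p := hu.differentiableAt three_ne_zero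
  have third_order_symm : dy (dx (dx u)) p = dx (dy (dx u)) p := pd_comm _ _ hux
  rw [dy_expDensity hu' (hux.differentiableAt two_ne_zero) (huy.differentiableAt two_ne_zero)
      (huxx.differentiableAt one_ne_zero),
    dx_expFlux hu' (huxy.differentiableAt one_ne_zero), third_order_symm, e1Residual]
  ring

theorem E1_conservation_law_exp_general (hu : ContDiffAt ℝ 3 u p)
    (hsol : dy (dy u) p =
      dy u p * dx (dx u) p - (dx u p + u p) * dy (dx u) p + dx u p * dy u p) :
    dy (fun q => -Real.exp (2 * q.1) * (u q * dx u q + u q * dx (dx u) q - dy u q)) p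
      = dx (fun q => -u q * Real.exp (2 * q.1) * dy (dx u) q) p := by
  have residual_eq_zero : e1Residual u p = 0 := sub_eq_zero.mpr hsol
  have divergence_eq_zero : dy (expDensity u) p - dx (expFlux u) p = 0 := by
    rw [dy_expDensity_sub_dx_expFlux hu, residual_eq_zero, mul_zero]
  exact sub_eq_zero.mp divergence_eq_zero

end ConservationLaw

/-- For a smooth solution `u` of Equation (E1)
`u_yy = u_y·u_xx − (u_x + u)·u_xy + u_x·u_y`, the pair
`P = −e^{2x}·(u·u_x + u·u_xx − u_y)`, `Q = −u·e^{2x}·u_xy` is a conservation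
law: `∂P/∂y = ∂Q/∂x`. -/
theorem E1_conservation_law_exp (u : ℝ × ℝ → ℝ)
    (hu : ContDiff ℝ (⊤ : ℕ∞) u)
    (hsol : ∀ p : ℝ × ℝ,
      dy (dy u) p =
        dy u p * dx (dx u) p - (dx u p + u p) * dy (dx u) p + dx u p * dy u p) :
    ∀ p : ℝ × ℝ,
      dy (fun q => -Real.exp (2 * q.1) * (u q * dx u q + u q * dx (dx u) q - dy u q)) p
        = dx (fun q => -u q * Real.exp (2 * q.1) * dy (dx u) q) p := by
  intro p
  exact E1_conservation_law_exp_general (contDiff_infty.mp hu 3).contDiffAt (hsol p)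
end
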